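/- arXiv:2105.15069 — 7 statements merged into one kernel-verified Lean document; each statement's English description precedes it below -/
import Mathlib

section
/- Suppose Y has more than two elements, L is symmetric (L y y' = L y' y for all y, y'), and the Max-Margin loss S_M is consistent to L, i.e., Fisher consistent to L under some decoding. Then L satisfies the triangle inequality L y y'' ≤ L y y' + L y' y'' for all y, y', y'' (so L is a distance), and for every y1, y2, y3 ∈ Y there exists z ∈ Y such that L y1 y2 = L y1 z + L z y2, L y1 y3 = L y1 z + L z y3, and L y2 y3 = L y2 z + L z y3. -/
open Finset Set

variable {Y : Type*} [Fintype Y] [DecidableEq Y] [Nonempty Y]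

/-- Probability simplex over `Y`. -/
def simplexSet (Y : Type*) [Fintype Y] : Set (Y → ℝ) :=
  {q | (∀ y, 0 ≤ q y) ∧ ∑ y, q y = 1}

/-- Bayes risk of the discrete loss `L`. -/
noncomputable def HL (L : Y → Y → ℝ) (q : Y → ℝ) : ℝ :=
  ⨅ y : Y, ∑ y', L y y' * q y'

/-- Optimal-label set. -/
noncomputable def ystar (L : Y → Y → ℝ) (q : Y → ℝ) : Set Y :=
  {y | ∑ y', L y y' * q y' = HL L q}

/-- Prediction set of label `y`. -/
noncomputable def predSet (L : Y → Y → ℝ) (y : Y) : Set (Y → ℝ) :=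
  {q ∈ simplexSet Y | y ∈ ystar L q}

/-- Max-Margin loss. -/
noncomputable def SM (L : Y → Y → ℝ) (v : Y → ℝ) (y : Y) : ℝ :=
  ⨆ y' : Y, (L y y' + v y' - v y)

/-- Bayes risk of the Max-Margin loss. -/
noncomputable def HM (L : Y → Y → ℝ) (q : Y → ℝ) : ℝ :=
  ⨅ v : Y → ℝ, ∑ y, q y * SM L v y

/-- Conditional-risk minimizers of the Max-Margin loss. -/
noncomputable def vstarM (L : Y → Y → ℝ) (q : Y → ℝ) : Set (Y → ℝ) :=
  {v | ∑ y, q y * SM L v y = HM L q}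

/-- Restricted-Max-Margin loss. -/
noncomputable def SRM (L : Y → Y → ℝ) (v : Y → ℝ) (y : Y) : ℝ :=
  sSup ((fun q => ∑ y', L y y' * q y' + ∑ z, v z * q z) '' predSet L y) - v y

/-- Bayes risk of the Restricted-Max-Margin loss. -/
noncomputable def HRM (L : Y → Y → ℝ) (q : Y → ℝ) : ℝ :=
  ⨅ v : Y → ℝ, ∑ y, q y * SRM L v y

/-- Conditional-risk minimizers of the Restricted-Max-Margin loss. -/
noncomputable def vstarRM (L : Y → Y → ℝ) (q : Y → ℝ) : Set (Y → ℝ) :=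
  {v | ∑ y, q y * SRM L v y = HRM L q}

/-- Max-Min-Margin loss. -/
noncomputable def SMM (L : Y → Y → ℝ) (v : Y → ℝ) (y : Y) : ℝ :=
  sSup ((fun q => (⨅ z : Y, ∑ y', L z y' * q y') + ∑ z, v z * q z) '' simplexSet Y) - v y

/-- Bayes risk of the Max-Min-Margin loss. -/
noncomputable def HMM (L : Y → Y → ℝ) (q : Y → ℝ) : ℝ :=
  ⨅ v : Y → ℝ, ∑ y, q y * SMM L v y

/-- Transportation polytope `U(q, q)`. -/
def Upoly (q : Y → ℝ) : Set (Y → Y → ℝ) :=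
  {Q | (∀ y y', 0 ≤ Q y y') ∧ (∀ y, ∑ y', Q y y' = q y) ∧ (∀ y', ∑ y, Q y y' = q y')}

/-- The constraint set `C_L`. -/
def CL (L : Y → Y → ℝ) : Set (Y → Y → ℝ) :=
  {Q | ∀ y z : Y, ∑ y', L y y' * Q y y' ≤ ∑ y', L z y' * Q y y'}

/-!
By linear programming duality, a coupling of `q` with itself that is supported on pairs `(y, y')`
with `y'` attaining the maximum in `SM L v y` certifies that `v` minimizes the conditional risk at
`q`. For `q` uniform on `{i, j}`, this applies when `i` and `j` attain each other's maximum, and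
then a consistent decoding sends `v` to a minimizer of `L · i + L · j`.

A single `v` can serve many pairs at once. Given points `p i` with radii `r i` such that
`L (p i) (p j) ≤ r i + r j`, the scores `v u = min_i (r i - L (p i) u)` work for every pair for
which this inequality is tight, so one label `z` minimizes `L · (p i) + L · (p j)` for all of them.
The points `a`, `b` with radii `L a b`, `0` force `z = b`, and minimality against the other labels
is the triangle inequality. Three points with radii that sum in pairs to the three distances, namely
the Gromov products, yield a label `z` that is metrically between any two of them.
-/

/-- The label `z` attains the maximum over labels that defines the Max-Margin loss `SM L v y`. -/
def IsMarginArgmax {α : Type*} (L : α → α → ℝ) (v : α → ℝ) (y z : α) : Prop :=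
  ∀ u, L y u + v u ≤ L y z + v z

theorem le_SM {α : Type*} [Finite α] (L : α → α → ℝ) (v : α → ℝ) (y z : α) :
    L y z + v z - v y ≤ SM L v y :=
  le_ciSup (f := fun u => L y u + v u - v y) (Set.finite_range _).bddAbove z

theorem IsMarginArgmax.SM_eq {α : Type*} [Finite α] {L : α → α → ℝ} {v : α → ℝ} {y z : α}
    (h : IsMarginArgmax L v y z) : SM L v y = L y z + v z - v y :=
  haveI : Nonempty α := ⟨z⟩
  le_antisymm (ciSup_le fun u => sub_le_sub_right (h u) _) (le_SM L v y z)

section Duality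

variable {α : Type*} [Fintype α] {L Q : α → α → ℝ} {q v : α → ℝ}

theorem sum_mul_SM_sub_eq (hQ : Q ∈ Upoly q) (L : α → α → ℝ) (v : α → ℝ) :
    ∑ y, q y * SM L v y - ∑ y, ∑ z, Q y z * L y z =
      ∑ y, ∑ z, Q y z * (SM L v y - (L y z + v z - v y)) := by
  obtain ⟨-, hrow, hcol⟩ := hQ
  have sum_row (f : α → ℝ) : ∑ y, ∑ z, Q y z * f y = ∑ y, q y * f y :=
    sum_congr rfl fun y _ => by rw [← sum_mul, hrow]
  have sum_col : ∑ y, ∑ z, Q y z * v z = ∑ z, q z * v z := by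
    rw [sum_comm]
    exact sum_congr rfl fun z _ => by rw [← sum_mul, hcol]
  simp only [mul_sub, mul_add, sum_sub_distrib, sum_add_distrib, sum_row, sum_col]
  ring

theorem sum_sum_mul_le_sum_mul_SM (hQ : Q ∈ Upoly q) (L : α → α → ℝ) (v : α → ℝ) :
    ∑ y, ∑ z, Q y z * L y z ≤ ∑ y, q y * SM L v y := by
  rw [← sub_nonneg, sum_mul_SM_sub_eq hQ]
  exact sum_nonneg fun y _ => sum_nonneg fun z _ =>
    mul_nonneg (hQ.1 y z) (sub_nonneg.2 (le_SM L v y z))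

theorem mem_vstarM_of_mem_Upoly (hQ : Q ∈ Upoly q)
    (hsupp : ∀ y z, Q y z ≠ 0 → IsMarginArgmax L v y z) : v ∈ vstarM L q := by
  have hv : ∑ y, q y * SM L v y = ∑ y, ∑ z, Q y z * L y z := by
    rw [← sub_eq_zero, sum_mul_SM_sub_eq hQ]
    refine sum_eq_zero fun y _ => sum_eq_zero fun z _ => ?_
    rcases eq_or_ne (Q y z) 0 with h0 | h0
    · rw [h0, zero_mul]
    · rw [(hsupp y z h0).SM_eq, sub_self, mul_zero]
  have hbound (w : α → ℝ) : ∑ y, q y * SM L v y ≤ ∑ y, q y * SM L w y :=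
    hv.trans_le (sum_sum_mul_le_sum_mul_SM hQ L w)
  exact le_antisymm (le_ciInf hbound) (ciInf_le ⟨_, Set.forall_mem_range.2 hbound⟩ v)

theorem sum_mul_le_of_mem_ystar {z : α} (hz : z ∈ ystar L q) (y : α) :
    ∑ u, L z u * q u ≤ ∑ u, L y u * q u :=
  (show _ = HL L q from hz).trans_le
    (ciInf_le (f := fun y => ∑ u, L y u * q u) (Set.finite_range _).bddBelow y)

end Duality

/-- The uniform distribution on the pair `i`, `j`, which is the point mass at `i` if `i = j`. -/
noncomputable def pairDist {α : Type*} [DecidableEq α] (i j : α) : α → ℝ :=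
  (2⁻¹ : ℝ) • (Pi.single i 1 + Pi.single j 1)

/-- The coupling of `pairDist i j` with itself that swaps `i` and `j`. -/
noncomputable def swapCoupling {α : Type*} [DecidableEq α] (i j : α) : α → α → ℝ :=
  (2⁻¹ : ℝ) • (Pi.single i (Pi.single j 1) + Pi.single j (Pi.single i 1))

theorem eq_or_eq_of_swapCoupling_ne_zero {α : Type*} [DecidableEq α] {i j y z : α}
    (h : swapCoupling i j y z ≠ 0) : y = i ∧ z = j ∨ y = j ∧ z = i := by
  contrapose! h
  simp only [swapCoupling, Pi.smul_apply, Pi.add_apply, Pi.single_apply, ite_apply, Pi.zero_apply,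
    smul_eq_mul]
  grind

section PairDist

variable {α : Type*} [Fintype α] [DecidableEq α]

theorem sum_mul_pairDist (i j : α) (f : α → ℝ) :
    ∑ y, f y * pairDist i j y = (f i + f j) / 2 := by
  simp [pairDist, Pi.single_apply, mul_add, sum_add_distrib, ← add_mul, div_eq_mul_inv]

theorem pairDist_mem_simplexSet (i j : α) : pairDist i j ∈ simplexSet α := by
  refine ⟨fun y => ?_, ?_⟩
  · simp only [pairDist, Pi.smul_apply, Pi.add_apply, Pi.single_apply]
    positivity
  · simpa using sum_mul_pairDist i j 1

theorem swapCoupling_mem_Upoly (i j : α) : swapCoupling i j ∈ Upoly (pairDist i j) := by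
  refine ⟨fun y z => ?_, fun y => ?_, fun z => ?_⟩
  · simp only [swapCoupling, Pi.smul_apply, Pi.add_apply, Pi.single_apply, ite_apply,
      Pi.zero_apply]
    positivity
  · simp [swapCoupling, pairDist, Pi.single_apply, ite_apply, ← mul_sum, sum_add_distrib]
  · simp [swapCoupling, pairDist, Pi.single_apply, ite_apply, ← mul_sum, sum_add_distrib, add_comm]

theorem mem_vstarM_pairDist {L : α → α → ℝ} {v : α → ℝ} {i j : α}
    (hij : IsMarginArgmax L v i j) (hji : IsMarginArgmax L v j i) :
    v ∈ vstarM L (pairDist i j) := by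
  refine mem_vstarM_of_mem_Upoly (swapCoupling_mem_Upoly i j) fun y z hyz => ?_
  rcases eq_or_eq_of_swapCoupling_ne_zero hyz with ⟨rfl, rfl⟩ | ⟨rfl, rfl⟩
  exacts [hij, hji]

theorem add_le_add_of_mem_ystar_pairDist {L : α → α → ℝ} {i j z : α}
    (hz : z ∈ ystar L (pairDist i j)) (y : α) : L z i + L z j ≤ L y i + L y j := by
  have hle := sum_mul_le_of_mem_ystar hz y
  rw [sum_mul_pairDist, sum_mul_pairDist] at hle
  linarith

end PairDist

theorem exists_forall_isMarginArgmax {α ι : Type*} [Finite ι] {L : α → α → ℝ} {p : ι → α}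
    {r : ι → ℝ} (hr : ∀ i j, L (p i) (p j) ≤ r i + r j) :
    ∃ v : α → ℝ, ∀ i j, L (p i) (p j) = r i + r j → IsMarginArgmax L v (p i) (p j) := by
  let v (u : α) : ℝ := ⨅ i, (r i - L (p i) u)
  have hv_le (i : ι) (u : α) : v u ≤ r i - L (p i) u :=
    ciInf_le (f := fun i => r i - L (p i) u) (Set.finite_range _).bddBelow i
  have hle_v (j : ι) : -r j ≤ v (p j) :=
    haveI : Nonempty ι := ⟨j⟩
    le_ciInf fun i => by linarith [hr i j]
  exact ⟨v, fun i j hij u => by linarith [hv_le i u, hle_v j]⟩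

theorem exists_nonneg_add_eq_of_le_add {K : Type*} [Field K] [LinearOrder K]
    [IsStrictOrderedRing K] {x y z : K} (hx : x ≤ y + z) (hy : y ≤ x + z) (hz : z ≤ x + y) :
    ∃ r s t : K, 0 ≤ r ∧ 0 ≤ s ∧ 0 ≤ t ∧ x = r + s ∧ y = r + t ∧ z = s + t := by
  refine ⟨(x + y - z) / 2, (x + z - y) / 2, (y + z - x) / 2, ?_, ?_, ?_, ?_, ?_, ?_⟩ <;> linarith

/-- The Max-Margin loss is Fisher consistent to `L` under the decoding `d`. -/
def IsConsistentDecoding {α : Type*} [Fintype α] (L : α → α → ℝ) (d : (α → ℝ) → α) : Prop :=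
  ∀ q ∈ simplexSet α, ∀ v ∈ vstarM L q, d v ∈ ystar L q

namespace IsConsistentDecoding

variable {α : Type*} [Fintype α] {L : α → α → ℝ} {d : (α → ℝ) → α}

theorem add_le_add_of_isMarginArgmax (hd : IsConsistentDecoding L d) {v : α → ℝ} {i j : α}
    (hij : IsMarginArgmax L v i j) (hji : IsMarginArgmax L v j i) (y : α) :
    L (d v) i + L (d v) j ≤ L y i + L y j := by
  classical
  exact add_le_add_of_mem_ystar_pairDist
    (hd _ (pairDist_mem_simplexSet i j) v (mem_vstarM_pairDist hij hji)) y

theorem exists_forall_add_le_add (hd : IsConsistentDecoding L d) (hsymm : ∀ y z, L y z = L z y)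
    {ι : Type*} [Finite ι] {p : ι → α} {r : ι → ℝ} (hr : ∀ i j, L (p i) (p j) ≤ r i + r j) :
    ∃ z, ∀ i j, L (p i) (p j) = r i + r j →
      ∀ y, L z (p i) + L z (p j) ≤ L y (p i) + L y (p j) := by
  obtain ⟨v, hv⟩ := exists_forall_isMarginArgmax hr
  refine ⟨d v, fun i j hij => hd.add_le_add_of_isMarginArgmax (hv i j hij) (hv j i ?_)⟩
  rw [hsymm, hij, add_comm]

theorem triangle (hd : IsConsistentDecoding L d) (hnonneg : ∀ y z, 0 ≤ L y z)
    (hzero : ∀ y z, L y z = 0 ↔ y = z) (hsymm : ∀ y z, L y z = L z y) (a c b : α) :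
    L a b ≤ L a c + L c b := by
  have hself (y : α) : L y y = 0 := (hzero y y).2 rfl
  obtain ⟨z, hz⟩ := hd.exists_forall_add_le_add hsymm (p := ![a, b]) (r := ![L a b, 0]) <| by
    simp [Fin.forall_fin_two, hself, hnonneg, hsymm b a]
  have hzb : z = b := by
    have hmin : L z b + L z b ≤ L b b + L b b := hz 1 1 (by simp [hself]) b
    exact (hzero z b).1 (by linarith [hself b, hnonneg z b])
  have hmin : L z a + L z b ≤ L c a + L c b := hz 0 1 (by simp) c
  rw [hzb, hself, add_zero] at hmin
  rwa [hsymm a b, hsymm a c]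

theorem exists_median (hd : IsConsistentDecoding L d) (hself : ∀ y, L y y = 0)
    (hsymm : ∀ y z, L y z = L z y) (htri : ∀ x y z, L x z ≤ L x y + L y z) (a b c : α) :
    ∃ z, L a b = L a z + L z b ∧ L a c = L a z + L z c ∧ L b c = L b z + L z c := by
  obtain ⟨r, s, t, hr, hs, ht, hab, hac, hbc⟩ :
      ∃ r s t, 0 ≤ r ∧ 0 ≤ s ∧ 0 ≤ t ∧ L a b = r + s ∧ L a c = r + t ∧ L b c = s + t :=
    exists_nonneg_add_eq_of_le_add (hsymm b c ▸ htri a c b) (htri a b c) (hsymm a b ▸ htri b a c)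
  obtain ⟨z, hz⟩ := hd.exists_forall_add_le_add hsymm (p := ![a, b, c]) (r := ![r, s, t]) <| by
    simp [Fin.forall_fin_succ, hself, hab, hac, hbc, hsymm b a, hsymm c a, hsymm c b, add_comm,
      hr, hs, ht]
  have hbetween (x y : α) (hmin : L z x + L z y ≤ L x x + L x y) : L x y = L x z + L z y :=
    (htri x z y).antisymm (by linarith [hself x, hsymm x z])
  exact ⟨z, hbetween a b (hz 0 1 hab a), hbetween a c (hz 0 2 hac a), hbetween b c (hz 1 2 hbc b)⟩

end IsConsistentDecoding

theorem stmt0 (Y : Type*) [Fintype Y] [DecidableEq Y] [Nonempty Y] (L : Y → Y → ℝ)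
    (hcard : 2 < Fintype.card Y)
    (hnonneg : ∀ y y', 0 ≤ L y y')
    (hzero : ∀ y y', L y y' = 0 ↔ y = y')
    (hsymm : ∀ y y', L y y' = L y' y)
    (hcons : ∃ d : (Y → ℝ) → Y, ∀ q ∈ simplexSet Y, ∀ v ∈ vstarM L q, d v ∈ ystar L q) :
    (∀ y y' y'' : Y, L y y'' ≤ L y y' + L y' y'') ∧
    ∀ y1 y2 y3 : Y, ∃ z : Y,
      L y1 y2 = L y1 z + L z y2 ∧
      L y1 y3 = L y1 z + L z y3 ∧
      L y2 y3 = L y2 z + L z y3 := by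
  obtain ⟨d, hd⟩ := hcons
  have hd : IsConsistentDecoding L d := hd
  have htri := hd.triangle hnonneg hzero hsymm
  exact ⟨htri, hd.exists_median (fun y => (hzero y y).2 rfl) hsymm htri⟩
end

section
/- If L is a distance (symmetric and satisfying the triangle inequality), then H_M(q) ≤ 2 · H_L(q) for all q ∈ Δ. -/
open Finset Set

variable {Y : Type*} [Fintype Y] [DecidableEq Y] [Nonempty Y]

/- The score vector `v = -L z` witnesses the bound: by the triangle inequality
`S_M(v, y) = max_{y'} (L y y' - L z y') + L z y ≤ L y z + L z y`, which is `2 * L z y` for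
symmetric `L`. Average over `q`, then minimise over the label `z`. -/

section

variable {α : Type*} {L : α → α → ℝ} {q : α → ℝ}

theorem SM_nonneg [Finite α] (v : α → ℝ) {y : α} (hL : 0 ≤ L y y) : 0 ≤ SM L v y :=
  le_ciSup_of_le (Set.finite_range _).bddAbove y (by linarith)

theorem SM_neg_le_add [Nonempty α] (htri : ∀ y y' y'', L y y'' ≤ L y y' + L y' y'') (z y : α) :
    SM L (-L z) y ≤ L z y + L y z :=
  ciSup_le fun y' => by
    simp only [Pi.neg_apply]
    linarith [htri y z y']

theorem HM_le_sum_SM [Fintype α] (hL : ∀ y, 0 ≤ L y y) (hq : ∀ y, 0 ≤ q y) (v : α → ℝ) :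
    HM L q ≤ ∑ y, q y * SM L v y := by
  refine ciInf_le ⟨0, ?_⟩ v
  rintro _ ⟨w, rfl⟩
  exact Finset.sum_nonneg fun y _ => mul_nonneg (hq y) (SM_nonneg w (hL y))

theorem HL_const_mul [Fintype α] {c : ℝ} (hc : 0 ≤ c) :
    HL (fun y y' => c * L y y') q = c * HL L q := by
  simp only [HL, mul_assoc, ← Finset.mul_sum, Real.mul_iInf_of_nonneg hc]

theorem stmt3_general [Fintype α] [Nonempty α]
    (htri : ∀ y y' y'', L y y'' ≤ L y y' + L y' y'') (hq : ∀ y, 0 ≤ q y) :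
    HM L q ≤ HL (fun y y' => L y y' + L y' y) q := by
  have hdiag : ∀ y, 0 ≤ L y y := fun y => by linarith [htri y y y]
  refine le_ciInf fun z => ?_
  calc HM L q ≤ ∑ y, q y * SM L (-L z) y := HM_le_sum_SM hdiag hq _
    _ ≤ ∑ y, q y * (L z y + L y z) := by
        gcongr with y
        · exact hq y
        · exact SM_neg_le_add htri z y
    _ = ∑ y, (L z y + L y z) * q y := by simp only [mul_comm]

end

theorem stmt3 (Y : Type*) [Fintype Y] [DecidableEq Y] [Nonempty Y] (L : Y → Y → ℝ)
    (hcard : 2 ≤ Fintype.card Y)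
    (hnonneg : ∀ y y', 0 ≤ L y y')
    (hzero : ∀ y y', L y y' = 0 ↔ y = y')
    (hsymm : ∀ y y', L y y' = L y' y)
    (htri : ∀ y y' y'' : Y, L y y'' ≤ L y y' + L y' y'') :
    ∀ q ∈ simplexSet Y, HM L q ≤ 2 * HL L q := by
  intro q hq
  simpa only [← hsymm, ← two_mul, HL_const_mul zero_le_two] using stmt3_general htri hq.1
end

section
/- Suppose that for every q ∈ Δ and every y ∈ Y, if q ∈ Δ(y) then q y > 0. Then the Restricted-Max-Margin loss embeds L with embedding ψ(y) = −L_y; more precisely: (a) H_RM(q) = H_L(q) for all q ∈ Δ; (b) for all q ∈ Δ and y ∈ Y, y ∈ y⋆(q) if and only if the vector (−L y y')_{y'∈Y} belongs to v⋆_RM(q); and (c) S_RM((−L y y')_{y'∈Y}, z) = L y z for all y, z ∈ Y. -/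
open Finset Set

variable {Y : Type*} [Fintype Y] [DecidableEq Y] [Nonempty Y]

/-!
If every label that is optimal at `q` lies in the support of `q`, then `ystar L q = support q` at
each extreme point `q` of a prediction set: extremality leaves no nonzero direction compatible with
the active constraints, and counting them gives `#(support q) ≤ #(ystar L q)`. At such a point `q`
is a competitor in the maximum defining `SRM L v z` for every `z` in its support, so that
`HL L q + ⟨v, q⟩ - v z ≤ SRM L v z`; averaging over `z` with weights `q z` cancels `v` and leaves
`HL L q ≤ ⟨q, SRM L v⟩`. Both sides are linear in `q` on a prediction set, hence the bound holds
everywhere by Krein–Milman.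

The bound is attained at `v = -L y` for every optimal `y`, because `SRM L (-L y) = L y`. Indeed, on
the segment joining the point masses at `y` and `z` only these two labels can be optimal, so by
connectedness both are optimal at some point of it, and there `⟨L z - L y, ·⟩` attains its maximum
over `predSet L z`, which is `0`.
-/

section ExtremePoints

open scoped Topology

theorem eventually_nonneg_add_mul {R : Type*} [Semiring R] [LinearOrder R] [TopologicalSpace R]
    [IsTopologicalSemiring R] [ClosedIicTopology R] {a b : R} (ha : 0 ≤ a)
    (hab : a = 0 → b = 0) : ∀ᶠ c in 𝓝 (0 : R), 0 ≤ a + c * b := by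
  rcases ha.eq_or_lt with rfl | ha
  · simp [hab rfl]
  · have hcont : Continuous fun c : R => a + c * b := by fun_prop
    exact hcont.tendsto' 0 a (by simp) |>.eventually (eventually_ge_nhds ha)

theorem eq_zero_of_mem_extremePoints_of_eventually_add_smul_mem {𝕜 E : Type*} [Field 𝕜]
    [LinearOrder 𝕜] [IsStrictOrderedRing 𝕜] [TopologicalSpace 𝕜] [OrderTopology 𝕜]
    [AddCommGroup E] [Module 𝕜 E] {s : Set E} {x d : E} (hx : x ∈ s.extremePoints 𝕜)
    (h : ∀ᶠ c in 𝓝 (0 : 𝕜), x + c • d ∈ s) : d = 0 := by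
  have hneg : ∀ᶠ c in 𝓝 (0 : 𝕜), x + -c • d ∈ s :=
    (continuous_neg.tendsto' (0 : 𝕜) 0 neg_zero).eventually h
  obtain ⟨c, ⟨hadd, hsub⟩, hc⟩ :=
    ((h.and hneg).filter_mono nhdsWithin_le_nhds |>.and (self_mem_nhdsWithin (s := {0}ᶜ))).exists
  have hmid : x ∈ openSegment 𝕜 (x + c • d) (x + -c • d) :=
    ⟨1 / 2, 1 / 2, by norm_num, by norm_num, by norm_num, by module⟩
  have hcd : c • d = 0 := by simpa using hx.2 hadd hsub hmid
  exact (smul_eq_zero.1 hcd).resolve_left hc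

end ExtremePoints

section DiscreteLoss

open scoped Topology
open Function Matrix Module

variable {ι : Type*} [Fintype ι]

theorem convex_setOf_nonneg_dotProduct {R : Type*} [CommRing R] [PartialOrder R]
    [IsOrderedRing R] (w : ι → R) : Convex R {q | 0 ≤ w ⬝ᵥ q} :=
  convex_halfSpace_ge ⟨dotProduct_add w, fun c => dotProduct_smul c w⟩ 0

variable {L : ι → ι → ℝ} {q : ι → ℝ} {y : ι}

theorem mem_ystar_iff : y ∈ ystar L q ↔ ∀ z, L y ⬝ᵥ q ≤ L z ⬝ᵥ q := by
  have : Nonempty ι := ⟨y⟩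
  have hHL : ∀ z, HL L q ≤ L z ⬝ᵥ q := ciInf_le (Set.finite_range _).bddBelow
  exact ⟨fun hy z => hy.le.trans (hHL z), fun hy => (le_ciInf hy).antisymm (hHL y)⟩

theorem exists_mem_predSet (hq : q ∈ simplexSet ι) : ∃ y, q ∈ predSet L y := by
  have : Nonempty ι := by
    by_contra! h
    simpa using hq.2
  obtain ⟨y, hy⟩ := Finite.exists_min fun z => L z ⬝ᵥ q
  exact ⟨y, hq, mem_ystar_iff.2 hy⟩

theorem predSet_eq_inter (L : ι → ι → ℝ) (y : ι) :
    predSet L y = stdSimplex ℝ ι ∩ ⋂ z, {q | 0 ≤ (L z - L y) ⬝ᵥ q} := by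
  ext q
  simp only [Set.mem_inter_iff, Set.mem_iInter, Set.mem_ofPred_eq, sub_dotProduct, sub_nonneg,
    ← mem_ystar_iff]
  rfl

theorem isCompact_predSet (L : ι → ι → ℝ) (y : ι) : IsCompact (predSet L y) := by
  rw [predSet_eq_inter]
  exact (isCompact_stdSimplex ℝ ι).inter_right <| isClosed_iInter fun z =>
    isClosed_le (by fun_prop) (by fun_prop)

theorem convex_predSet (L : ι → ι → ℝ) (y : ι) : Convex ℝ (predSet L y) := by
  rw [predSet_eq_inter]
  exact (convex_stdSimplex ℝ ι).inter <| convex_iInter fun z =>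
    convex_setOf_nonneg_dotProduct (L z - L y)

theorem eventually_add_smul_mem_predSet {d : ι → ℝ} (hq : q ∈ predSet L y) (hsum : ∑ z, d z = 0)
    (hsupp : ∀ z, q z = 0 → d z = 0) (htight : ∀ z ∈ ystar L q, (L z - L y) ⬝ᵥ d = 0) :
    ∀ᶠ c in 𝓝 (0 : ℝ), q + c • d ∈ predSet L y := by
  have hmin := mem_ystar_iff.1 hq.2
  have hcoord : ∀ᶠ c in 𝓝 (0 : ℝ), ∀ z, 0 ≤ q z + c * d z :=
    Filter.eventually_all.2 fun z => eventually_nonneg_add_mul (hq.1.1 z) (hsupp z)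
  have hrisk : ∀ᶠ c in 𝓝 (0 : ℝ), ∀ z, 0 ≤ (L z - L y) ⬝ᵥ q + c * (L z - L y) ⬝ᵥ d := by
    refine Filter.eventually_all.2 fun z => eventually_nonneg_add_mul ?_ fun hz => htight z ?_
    · simpa only [sub_dotProduct, sub_nonneg] using hmin z
    · rw [sub_dotProduct, sub_eq_zero] at hz
      exact mem_ystar_iff.2 fun w => hz.trans_le (hmin w)
  filter_upwards [hcoord, hrisk] with c hcoord hrisk
  rw [predSet_eq_inter]
  refine ⟨⟨hcoord, ?_⟩, Set.mem_iInter.2 fun z => ?_⟩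
  · simp [sum_add_distrib, ← mul_sum, hsum, hq.1.2]
  · simpa only [Set.mem_ofPred_eq, dotProduct_add, dotProduct_smul, smul_eq_mul] using hrisk z

theorem ncard_support_le_ncard_ystar (hq : q ∈ (predSet L y).extremePoints ℝ) :
    (support q).ncard ≤ (ystar L q).ncard := by
  classical
  let zeroExtend : (support q → ℝ) →ₗ[ℝ] ι → ℝ := ExtendByZero.linearMap ℝ Subtype.val
  -- Comparing the risk of `y` with itself is void, so row `y` is free to record `∑ z, d z = 0`.
  let constraints : Matrix (ystar L q) ι ℝ := fun z => if z = y then 1 else L z - L y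
  have hinj : Injective (constraints.mulVecLin ∘ₗ zeroExtend) := by
    refine (injective_iff_map_eq_zero _).2 fun d hd => ?_
    have hrow : ∀ z, constraints z ⬝ᵥ zeroExtend d = 0 := congrFun hd
    have hsum : ∑ z, zeroExtend d z = 0 := by
      simpa only [constraints, if_true, one_dotProduct] using hrow ⟨y, hq.1.2⟩
    have htight : ∀ z ∈ ystar L q, (L z - L y) ⬝ᵥ zeroExtend d = 0 := by
      intro z hz
      rcases eq_or_ne z y with rfl | hzy
      · rw [sub_self, zero_dotProduct]
      · simpa only [constraints, if_neg hzy] using hrow ⟨z, hz⟩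
    have hsupp : ∀ z, q z = 0 → zeroExtend d z = 0 := fun z hz =>
      extend_apply' (f := Subtype.val) d 0 z fun ⟨w, hw⟩ => w.2 (hw ▸ hz)
    have hzero : zeroExtend d = 0 := eq_zero_of_mem_extremePoints_of_eventually_add_smul_mem hq
      (eventually_add_smul_mem_predSet hq.1 hsum hsupp htight)
    exact extend_injective Subtype.val_injective (0 : ι → ℝ)
      (hzero.trans (map_zero zeroExtend).symm)
  simpa only [finrank_fintype_fun_eq_card, Fintype.card_eq_nat_card, Nat.card_coe_set_eq]
    using LinearMap.finrank_le_finrank_of_injective hinj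

theorem ystar_eq_support_of_mem_extremePoints (hpos : ∀ y, ∀ q ∈ predSet L y, 0 < q y)
    (hq : q ∈ (predSet L y).extremePoints ℝ) : ystar L q = support q :=
  Set.eq_of_subset_of_ncard_le (fun z hz => (hpos z q ⟨hq.1.1, hz⟩).ne')
    (ncard_support_le_ncard_ystar hq)

theorem le_SRM (hq : q ∈ predSet L y) (v : ι → ℝ) :
    L y ⬝ᵥ q + v ⬝ᵥ q - v y ≤ SRM L v y := by
  have hbdd : BddAbove ((fun p => L y ⬝ᵥ p + v ⬝ᵥ p) '' predSet L y) :=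
    ((isCompact_predSet L y).image (by fun_prop)).bddAbove
  exact sub_le_sub_right (le_csSup hbdd (Set.mem_image_of_mem _ hq)) _

theorem HL_le_dotProduct_SRM_of_support_subset_ystar (hq : q ∈ simplexSet ι)
    (h : support q ⊆ ystar L q) (v : ι → ℝ) : HL L q ≤ q ⬝ᵥ SRM L v := by
  have hle : ∀ z, q z * (HL L q + v ⬝ᵥ q - v z) ≤ q z * SRM L v z := by
    intro z
    rcases eq_or_ne (q z) 0 with hz | hz
    · simp only [hz, zero_mul, le_refl]
    · have hSRM : HL L q + v ⬝ᵥ q - v z ≤ SRM L v z := by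
        rw [← show L z ⬝ᵥ q = HL L q from h hz]
        exact le_SRM ⟨hq, h hz⟩ v
      exact mul_le_mul_of_nonneg_left hSRM (hq.1 z)
  calc HL L q = ∑ z, q z * (HL L q + v ⬝ᵥ q) - q ⬝ᵥ v := by
        rw [← sum_mul, hq.2, one_mul, dotProduct_comm q v, add_sub_cancel_right]
    _ = ∑ z, q z * (HL L q + v ⬝ᵥ q - v z) := by
        simp only [mul_sub, sum_sub_distrib, dotProduct]
    _ ≤ q ⬝ᵥ SRM L v := sum_le_sum fun z _ => hle z

theorem HL_le_dotProduct_SRM (hpos : ∀ y, ∀ q ∈ predSet L y, 0 < q y)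
    (hq : q ∈ simplexSet ι) (v : ι → ℝ) : HL L q ≤ q ⬝ᵥ SRM L v := by
  obtain ⟨y, hy⟩ := exists_mem_predSet (L := L) hq
  let s : Set (ι → ℝ) := {p | 0 ≤ (SRM L v - L y) ⬝ᵥ p}
  have hmem : ∀ p ∈ predSet L y, p ∈ s ↔ HL L p ≤ p ⬝ᵥ SRM L v := by
    intro p hp
    rw [← show L y ⬝ᵥ p = HL L p from hp.2, dotProduct_comm p, ← sub_nonneg, ← sub_dotProduct]
    rfl
  have hextreme : (predSet L y).extremePoints ℝ ⊆ s := fun e he =>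
    (hmem e he.1).2 <| HL_le_dotProduct_SRM_of_support_subset_ystar he.1.1
      (ystar_eq_support_of_mem_extremePoints hpos he).ge v
  have hclosed : IsClosed s := isClosed_le (by fun_prop) (by fun_prop)
  have hsub : closure (convexHull ℝ ((predSet L y).extremePoints ℝ)) ⊆ s :=
    closure_minimal (convexHull_min hextreme (convex_setOf_nonneg_dotProduct _)) hclosed
  rw [closure_convexHull_extremePoints (isCompact_predSet L y) (convex_predSet L y)] at hsub
  exact (hmem q hy).1 (hsub hy)

theorem predSet_inter_predSet_nonempty (hpos : ∀ y, ∀ q ∈ predSet L y, 0 < q y) (y z : ι) :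
    (predSet L y ∩ predSet L z).Nonempty := by
  classical
  let vertex (w : ι) : ι → ℝ := Pi.single w 1
  have hsimplex : segment ℝ (vertex y) (vertex z) ⊆ simplexSet ι :=
    (convex_stdSimplex ℝ ι).segment_subset (single_mem_stdSimplex ℝ y) (single_mem_stdSimplex ℝ z)
  have hcover : segment ℝ (vertex y) (vertex z) ⊆ predSet L y ∪ predSet L z := by
    intro p hp
    obtain ⟨w, hw⟩ := exists_mem_predSet (L := L) (hsimplex hp)
    have hpw := hpos w p hw
    obtain rfl | rfl : w = y ∨ w = z := by
      by_contra! h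
      obtain ⟨a, b, -, -, -, rfl⟩ := hp
      simp [vertex, h.1, h.2] at hpw
    · exact .inl hw
    · exact .inr hw
  have hvertex : ∀ w, vertex w ∈ predSet L w := by
    intro w
    obtain ⟨x, hx⟩ := exists_mem_predSet (L := L) (single_mem_stdSimplex ℝ w)
    obtain rfl : x = w := by
      by_contra h
      simpa [h] using hpos x _ hx
    exact hx
  exact (isPreconnected_closed_iff.1 (convex_segment _ _).isPreconnected _ _
    (isCompact_predSet L y).isClosed (isCompact_predSet L z).isClosed hcover
    ⟨_, left_mem_segment ℝ _ _, hvertex y⟩ ⟨_, right_mem_segment ℝ _ _, hvertex z⟩).mono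
    Set.inter_subset_right

theorem SRM_neg_apply {z : ι} (h : (predSet L y ∩ predSet L z).Nonempty) :
    SRM L (-L y) z = L y z := by
  obtain ⟨q, hqy, hqz⟩ := h
  have hrisk : L z ⬝ᵥ q = L y ⬝ᵥ q := hqz.2.trans hqy.2.symm
  have hmax : IsGreatest ((fun p => L z ⬝ᵥ p + -L y ⬝ᵥ p) '' predSet L z) 0 := by
    refine ⟨⟨q, hqz, by simp [hrisk]⟩, ?_⟩
    rintro _ ⟨p, hp, rfl⟩
    simpa using mem_ystar_iff.1 hp.2 y
  calc SRM L (-L y) z = 0 - (-L y) z := congrArg (· - (-L y) z) hmax.csSup_eq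
    _ = L y z := by simp

theorem SRM_neg (hpos : ∀ y, ∀ q ∈ predSet L y, 0 < q y) (y : ι) : SRM L (-L y) = L y :=
  funext fun z => SRM_neg_apply (predSet_inter_predSet_nonempty hpos y z)

theorem HRM_eq_HL (hpos : ∀ y, ∀ q ∈ predSet L y, 0 < q y) (hq : q ∈ simplexSet ι) :
    HRM L q = HL L q := by
  have hbound := HL_le_dotProduct_SRM hpos hq
  obtain ⟨y, hy⟩ := exists_mem_predSet (L := L) hq
  refine le_antisymm ?_ (le_ciInf hbound)
  calc HRM L q ≤ q ⬝ᵥ SRM L (-L y) := ciInf_le ⟨HL L q, Set.forall_mem_range.2 hbound⟩ (-L y)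
    _ = L y ⬝ᵥ q := by rw [SRM_neg hpos, dotProduct_comm]
    _ = HL L q := hy.2

theorem mem_ystar_iff_neg_mem_vstarRM (hpos : ∀ y, ∀ q ∈ predSet L y, 0 < q y)
    (hq : q ∈ simplexSet ι) (y : ι) : y ∈ ystar L q ↔ -L y ∈ vstarRM L q := by
  change L y ⬝ᵥ q = HL L q ↔ q ⬝ᵥ SRM L (-L y) = HRM L q
  rw [SRM_neg hpos, HRM_eq_HL hpos hq, dotProduct_comm]

theorem stmt6_general (hpos : ∀ y, ∀ q ∈ predSet L y, 0 < q y) :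
    (∀ q ∈ simplexSet ι, HRM L q = HL L q) ∧
    (∀ q ∈ simplexSet ι, ∀ y : ι,
      y ∈ ystar L q ↔ (fun y' => -(L y y')) ∈ vstarRM L q) ∧
    (∀ y z : ι, SRM L (fun y' => -(L y y')) z = L y z) :=
  ⟨fun _ => HRM_eq_HL hpos, fun _ => mem_ystar_iff_neg_mem_vstarRM hpos,
    fun y => congrFun (SRM_neg hpos y)⟩

end DiscreteLoss

theorem stmt6 (Y : Type*) [Fintype Y] [DecidableEq Y] [Nonempty Y] (L : Y → Y → ℝ)
    (hcard : 2 ≤ Fintype.card Y)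
    (hnonneg : ∀ y y', 0 ≤ L y y')
    (hzero : ∀ y y', L y y' = 0 ↔ y = y')
    (hpos : ∀ q ∈ simplexSet Y, ∀ y : Y, q ∈ predSet L y → 0 < q y) :
    (∀ q ∈ simplexSet Y, HRM L q = HL L q) ∧
    (∀ q ∈ simplexSet Y, ∀ y : Y,
      y ∈ ystar L q ↔ (fun y' => -(L y y')) ∈ vstarRM L q) ∧
    (∀ y z : Y, SRM L (fun y' => -(L y y')) z = L y z) :=
  stmt6_general fun y q hq => hpos q hq.1 y hq
end

section
/- For every q ∈ Δ, the Bayes risk of the Max-Min-Margin loss equals the Bayes risk of the discrete loss: H_MM(q) = H_L(q), i.e., inf_{v : Y → ℝ} ∑_{y} q y · S_MM(v, y) = min_{y ∈ Y} ⟨L_y, q⟩. -/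
open Finset Set

variable {Y : Type*} [Fintype Y] [DecidableEq Y] [Nonempty Y]

/-!
The conditional risk of the Max-Min-Margin loss at `v` is `(-H_L)^*(v) - ⟨v, q⟩`, with the conjugate
taken over the simplex, so its infimum over `v` is minus the biconjugate of `-H_L` at `q`. Because
`H_L` is a lower envelope of linear functionals `⟨L_y, ·⟩`, the biconjugate recovers `-H_L` without
any minimax theorem: Fenchel–Young gives one inequality, and the scores `v = -L_y` give the other,
as their conjugates are nonpositive.
-/

section FenchelDuality

variable {V E : Type*} [AddCommGroup V] [Module ℝ V] [AddCommGroup E] [Module ℝ E]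
  {B : V →ₗ[ℝ] E →ₗ[ℝ] ℝ} {S : Set E} {H : E → ℝ}

/-- The Fenchel conjugate of `-H` restricted to `S`, for the pairing `B`; for a Bayes risk `H` it is
the term of the Max-Min-Margin loss that does not depend on the label. The supremum is real-valued,
hence `0` where the conjugate would be infinite. -/
noncomputable def entropyConj (B : V →ₗ[ℝ] E →ₗ[ℝ] ℝ) (S : Set E) (H : E → ℝ) (v : V) : ℝ :=
  sSup ((fun p => H p + B v p) '' S)

theorem bddAbove_image_add_pairing {a v : V} (hS : BddAbove (B (a + v) '' S))
    (hH : ∀ p ∈ S, H p ≤ B a p) : BddAbove ((fun p => H p + B v p) '' S) := by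
  obtain ⟨M, hM⟩ := hS
  refine ⟨M, forall_mem_image.2 fun p hp => ?_⟩
  calc H p + B v p ≤ B a p + B v p := by gcongr; exact hH p hp
    _ = B (a + v) p := by rw [map_add, LinearMap.add_apply]
    _ ≤ M := hM (mem_image_of_mem _ hp)

theorem le_entropyConj_sub {v : V} {q : E} (hbdd : BddAbove ((fun p => H p + B v p) '' S))
    (hq : q ∈ S) : H q ≤ entropyConj B S H v - B v q :=
  le_sub_iff_add_le.2 (le_csSup hbdd (mem_image_of_mem _ hq))

theorem entropyConj_neg_nonpos {a : V} (hH : ∀ p ∈ S, H p ≤ B a p) :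
    entropyConj B S H (-a) ≤ 0 :=
  Real.sSup_nonpos <| forall_mem_image.2 fun p hp => by
    simpa only [map_neg, LinearMap.neg_apply, add_neg_le_iff_le_add, zero_add] using hH p hp

theorem isGLB_range_entropyConj_sub {ι : Type*} {a : ι → V} {q : E}
    (hS : ∀ v, BddAbove (B v '' S)) (hH : ∀ p ∈ S, IsGLB (range fun i => B (a i) p) (H p))
    (hq : q ∈ S) : IsGLB (range fun v => entropyConj B S H v - B v q) (H q) := by
  have hle (i : ι) : ∀ p ∈ S, H p ≤ B (a i) p := fun p hp => (hH p hp).1 (mem_range_self i)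
  constructor
  · obtain ⟨_, i, -⟩ := (hH q hq).nonempty
    exact forall_mem_range.2 fun v =>
      le_entropyConj_sub (bddAbove_image_add_pairing (hS (a i + v)) (hle i)) hq
  · intro b hb
    refine (hH q hq).2 (forall_mem_range.2 fun i => ?_)
    calc b ≤ entropyConj B S H (-a i) - B (-a i) q := hb (mem_range_self (-a i))
      _ = entropyConj B S H (-a i) + B (a i) q := by
        rw [map_neg, LinearMap.neg_apply, sub_neg_eq_add]
      _ ≤ B (a i) q := add_le_of_nonpos_left (entropyConj_neg_nonpos (hle i))

end FenchelDuality

theorem isCompact_simplexSet (Y : Type*) [Fintype Y] : IsCompact (simplexSet Y) :=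
  isCompact_stdSimplex ℝ Y

theorem bddAbove_dotProduct_image_simplexSet {Y : Type*} [Fintype Y] (v : Y → ℝ) :
    BddAbove (dotProductBilin ℝ ℝ v '' simplexSet Y) :=
  (isCompact_simplexSet Y).bddAbove_image (LinearMap.continuous_of_finiteDimensional _).continuousOn

theorem isGLB_range_HL {Y : Type*} [Fintype Y] [Nonempty Y] (L : Y → Y → ℝ) (q : Y → ℝ) :
    IsGLB (range fun y => dotProductBilin ℝ ℝ (L y) q) (HL L q) :=
  isGLB_ciInf (finite_range _).bddBelow

theorem sum_mul_SMM {Y : Type*} [Fintype Y] (L : Y → Y → ℝ) (v : Y → ℝ) {q : Y → ℝ}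
    (hq : ∑ y, q y = 1) :
    ∑ y, q y * SMM L v y =
      entropyConj (dotProductBilin ℝ ℝ) (simplexSet Y) (HL L) v - dotProductBilin ℝ ℝ v q := by
  set c := entropyConj (dotProductBilin ℝ ℝ) (simplexSet Y) (HL L) v
  calc ∑ y, q y * SMM L v y = ∑ y, q y * (c - v y) := rfl
    _ = (∑ y, q y) * c - ∑ y, v y * q y := by
      simp only [mul_sub, sum_sub_distrib, sum_mul, mul_comm]
    _ = c - dotProductBilin ℝ ℝ v q := by rw [hq, one_mul]; rfl

theorem stmt8_general (Y : Type*) [Fintype Y] [Nonempty Y] (L : Y → Y → ℝ) :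
    ∀ q ∈ simplexSet Y, HMM L q = HL L q := by
  intro q hq
  calc HMM L q
      = ⨅ v, entropyConj (dotProductBilin ℝ ℝ) (simplexSet Y) (HL L) v - dotProductBilin ℝ ℝ v q :=
        iInf_congr fun v => sum_mul_SMM L v hq.2
    _ = HL L q :=
        (isGLB_range_entropyConj_sub bddAbove_dotProduct_image_simplexSet
          (fun p _ => isGLB_range_HL L p) hq).ciInf_eq

theorem stmt8 (Y : Type*) [Fintype Y] [DecidableEq Y] [Nonempty Y] (L : Y → Y → ℝ)
    (hcard : 2 ≤ Fintype.card Y)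
    (hnonneg : ∀ y y', 0 ≤ L y y')
    (hzero : ∀ y y', L y y' = 0 ↔ y = y') :
    ∀ q ∈ simplexSet Y, HMM L q = HL L q :=
  stmt8_general Y L
end

section
/- For every q ∈ Δ, the Bayes risk of the Max-Margin loss satisfies H_M(q) = max_{Q ∈ U(q, q)} ⟨L, Q⟩_F, where the maximum is over the transportation polytope U(q, q) (which is nonempty and compact). -/
open Finset Set

variable {Y : Type*} [Fintype Y] [DecidableEq Y] [Nonempty Y]

/-!
Perturbing the cost by a potential `v` of the second variable changes the cost of every plan with
marginals `p` and `q` by the same amount `∑ y, q y * v y`. If only the first marginal is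
prescribed, the maximal cost is explicit: each `x` sends all its mass to a maximizer of its row of
the cost. So every `v` bounds the costs of the plans with both marginals prescribed. The bound is
sharp in the infimum over `v`: by Hahn-Banach, the constraint on the second marginal has a Lagrange
multiplier over the compact convex set of plans with prescribed first marginal. The Max-Margin risk
of `v` is exactly the bound given by `v` when `p = q`.
-/

section LagrangeMultiplier

variable {E F : Type*} [AddCommGroup E] [Module ℝ E] [TopologicalSpace E]
  [AddCommGroup F] [Module ℝ F] [TopologicalSpace F] [IsTopologicalAddGroup F]
  [ContinuousSMul ℝ F] [LocallyConvexSpace ℝ F] [T2Space F]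

theorem exists_strongDual_forall_add_lt_of_isCompact {K : Set E} (hK : IsCompact K)
    (hconv : Convex ℝ K) (A : E →L[ℝ] F) (l : E →L[ℝ] ℝ) {b : F} {t : ℝ}
    (hfeasible : ∃ x ∈ K, A x = b) (hlt : ∀ x ∈ K, A x = b → l x < t) :
    ∃ φ : StrongDual ℝ F, ∀ x ∈ K, l x + φ (A x - b) < t := by
  have hnotMem : (b, t) ∉ A.prod l '' K := by
    rintro ⟨x, hx, hxbt⟩
    exact (hlt x hx (congrArg Prod.fst hxbt)).ne (congrArg Prod.snd hxbt)
  obtain ⟨f, u, hfu, huf⟩ := geometric_hahn_banach_closed_point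
    (hconv.linear_image (A.prod l).toLinearMap) (hK.image (A.prod l).continuous).isClosed hnotMem
  set g : StrongDual ℝ F := f.comp (.inl ℝ F ℝ) with hg
  set c : ℝ := f (0, 1) with hc
  have hf (y : F) (s : ℝ) : f (y, s) = g y + s * c := by
    rw [hg, hc, ← smul_eq_mul, ← map_smul, ContinuousLinearMap.comp_apply, ← map_add]
    simp
  have hsep : ∀ x ∈ K, g (A x) + l x * c < g b + t * c := fun x hx ↦ by
    rw [← hf, ← hf]
    exact (hfu _ ⟨x, hx, rfl⟩).trans huf
  have hc_pos : 0 < c := by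
    obtain ⟨x, hx, hxb⟩ := hfeasible
    have hlt_mul : l x * c < t * c := by simpa [hxb] using hsep x hx
    exact pos_of_mul_pos_right (by linarith : 0 < (t - l x) * c) (sub_pos.2 (hlt x hx hxb)).le
  refine ⟨c⁻¹ • g, fun x hx ↦ lt_of_mul_lt_mul_right ?_ hc_pos.le⟩
  calc (l x + (c⁻¹ • g) (A x - b)) * c = g (A x) + l x * c - g b := by
        simp only [smul_apply, smul_eq_mul, map_sub]
        field_simp
        ring
    _ < t * c := by linarith [hsep x hx]

end LagrangeMultiplier

section TransportPlans

variable {α β : Type*}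

/-- Second marginal of a transport plan, as a continuous linear map so that prescribing it is a
linear constraint on the plan. -/
def secondMarginal [Fintype α] : (α → β → ℝ) →L[ℝ] (β → ℝ) :=
  ∑ x, .proj x

theorem secondMarginal_apply [Fintype α] (Q : α → β → ℝ) (y : β) :
    secondMarginal Q y = ∑ x, Q x y := by
  simp [secondMarginal]

variable [Fintype β]

/-- Transport plans with first marginal `p`, as nonnegative matrices: the feasible set left when the
constraint on the second marginal is relaxed. -/
def plansFrom (p : α → ℝ) : Set (α → β → ℝ) :=
  {Q | (∀ x y, 0 ≤ Q x y) ∧ ∀ x, ∑ y, Q x y = p x}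

theorem nonneg_of_mem_plansFrom {p : α → ℝ} {Q : α → β → ℝ} (hQ : Q ∈ plansFrom p) (x : α) :
    0 ≤ p x :=
  hQ.2 x ▸ Finset.sum_nonneg fun y _ ↦ hQ.1 x y

theorem convex_plansFrom (p : α → ℝ) : Convex ℝ (plansFrom p : Set (α → β → ℝ)) := by
  rintro Q ⟨hQ, hQp⟩ R ⟨hR, hRp⟩ a b ha hb hab
  refine ⟨fun x y ↦ add_nonneg (mul_nonneg ha (hQ x y)) (mul_nonneg hb (hR x y)), fun x ↦ ?_⟩
  simp only [Pi.add_apply, Pi.smul_apply, smul_eq_mul, Finset.sum_add_distrib, ← Finset.mul_sum,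
    hQp, hRp, ← add_mul, hab, one_mul]

theorem isCompact_plansFrom (p : α → ℝ) : IsCompact (plansFrom p : Set (α → β → ℝ)) := by
  have hsubset : (plansFrom p : Set (α → β → ℝ)) ⊆ Set.Icc 0 fun x _ ↦ p x :=
    fun Q hQ ↦ ⟨hQ.1, fun x y ↦
      (Finset.single_le_sum (fun z _ ↦ hQ.1 x z) (Finset.mem_univ y)).trans_eq (hQ.2 x)⟩
  have hclosed : IsClosed (plansFrom p : Set (α → β → ℝ)) := by
    simp only [plansFrom, Set.ofPred_and, Set.ofPred_forall]
    exact (isClosed_iInter fun x ↦ isClosed_iInter fun y ↦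
      isClosed_le (by fun_prop) (by fun_prop)).inter
        (isClosed_iInter fun x ↦ isClosed_eq (by fun_prop) (by fun_prop))
  exact isCompact_Icc.of_isClosed_subset hclosed hsubset

theorem single_mem_plansFrom [DecidableEq β] {p : α → ℝ} (hp : ∀ x, 0 ≤ p x) (m : α → β) :
    (fun x ↦ Pi.single (m x) (p x)) ∈ plansFrom p :=
  ⟨fun x ↦ show (0 : β → ℝ) ≤ Pi.single (m x) (p x) from Pi.single_nonneg.2 (hp x),
    fun x ↦ by simp⟩

variable [Fintype α]

/-- Transportation polytope `U(p, q)` for marginals on possibly different types; `Upoly q` is the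
case `p = q`. -/
def transportPlans (p : α → ℝ) (q : β → ℝ) : Set (α → β → ℝ) :=
  {Q ∈ plansFrom p | secondMarginal Q = q}

/-- Total cost `⟨c, Q⟩_F` of a transport plan `Q`, as a continuous linear functional of the plan. -/
def transportCost (c : α → β → ℝ) : (α → β → ℝ) →L[ℝ] ℝ :=
  ∑ x, ∑ y, c x y • .comp (.proj (φ := fun _ : β ↦ ℝ) y) (.proj x)

theorem transportCost_apply (c Q : α → β → ℝ) :
    transportCost c Q = ∑ x, ∑ y, c x y * Q x y := by
  simp [transportCost]

theorem transportCost_add_potential (c Q : α → β → ℝ) (v : β → ℝ) :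
    transportCost (fun x y ↦ c x y + v y) Q
      = transportCost c Q + ∑ y, secondMarginal Q y * v y := by
  simp only [transportCost_apply, secondMarginal_apply, add_mul, Finset.sum_add_distrib,
    Finset.sum_mul, mul_comm (v _)]
  rw [Finset.sum_comm (f := fun x y ↦ Q x y * v y)]

theorem isCompact_transportPlans (p : α → ℝ) (q : β → ℝ) : IsCompact (transportPlans p q) :=
  (isCompact_plansFrom p).inter_right (isClosed_eq secondMarginal.continuous continuous_const)

theorem isGreatest_transportCost_plansFrom [Nonempty β] (c : α → β → ℝ) {p : α → ℝ}
    (hp : ∀ x, 0 ≤ p x) :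
    IsGreatest (transportCost c '' plansFrom p) (∑ x, p x * ⨆ y, c x y) := by
  classical
  constructor
  · choose m hm using fun x ↦ exists_eq_ciSup_of_finite (f := c x)
    refine ⟨_, single_mem_plansFrom hp m, ?_⟩
    simp [transportCost_apply, Pi.single_apply, hm, mul_comm]
  · rintro _ ⟨Q, ⟨hQ, hQp⟩, rfl⟩
    rw [transportCost_apply]
    refine Finset.sum_le_sum fun x _ ↦ ?_
    calc ∑ y, c x y * Q x y ≤ ∑ y, (⨆ y, c x y) * Q x y := by
          gcongr with y
          · exact hQ x y
          · exact le_ciSup (Set.finite_range (c x)).bddAbove y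
      _ = p x * ⨆ y, c x y := by rw [← Finset.mul_sum, hQp, mul_comm]

end TransportPlans

section KantorovichDuality

variable {α β : Type*} [Fintype α] [Fintype β] [Nonempty β]

/-- Objective of the Kantorovich dual problem with marginals `p` and `q`, as a function of minus the
potential of the second variable; the potential of the first one is taken to be the least feasible
one, `fun x ↦ ⨆ y, (c x y + v y)`. -/
noncomputable def kantorovichDual (c : α → β → ℝ) (p : α → ℝ) (q v : β → ℝ) : ℝ :=
  ∑ x, p x * (⨆ y, (c x y + v y)) - ∑ y, q y * v y

theorem transportCost_le_kantorovichDual (c : α → β → ℝ) {p : α → ℝ} {q : β → ℝ}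
    {Q : α → β → ℝ} (hQ : Q ∈ transportPlans p q) (v : β → ℝ) :
    transportCost c Q ≤ kantorovichDual c p q v := by
  obtain ⟨hQp, rfl⟩ := hQ
  have hle := (isGreatest_transportCost_plansFrom (fun x y ↦ c x y + v y)
    (nonneg_of_mem_plansFrom hQp)).2 ⟨Q, hQp, rfl⟩
  rw [transportCost_add_potential] at hle
  exact le_sub_iff_add_le.2 hle

theorem exists_kantorovichDual_lt (c : α → β → ℝ) {p : α → ℝ} {q : β → ℝ} {t : ℝ}
    (hne : (transportPlans p q).Nonempty) (hlt : ∀ Q ∈ transportPlans p q, transportCost c Q < t) :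
    ∃ v, kantorovichDual c p q v < t := by
  classical
  have hp : ∀ x, 0 ≤ p x := nonneg_of_mem_plansFrom hne.some_mem.1
  obtain ⟨φ, hφ⟩ := exists_strongDual_forall_add_lt_of_isCompact (isCompact_plansFrom p)
    (convex_plansFrom p) secondMarginal (transportCost c) hne fun Q hQ hQq ↦ hlt Q ⟨hQ, hQq⟩
  set v : β → ℝ := fun y ↦ φ fun z ↦ if y = z then 1 else 0
  obtain ⟨Q, hQ, hQ_cost⟩ :=
    (isGreatest_transportCost_plansFrom (fun x y ↦ c x y + v y) hp).1
  refine ⟨v, ?_⟩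
  have hφ_apply (w : β → ℝ) : φ w = ∑ y, w y * v y := φ.toLinearMap.pi_apply_eq_sum_univ w
  calc kantorovichDual c p q v = transportCost c Q + φ (secondMarginal Q - q) := by
        rw [kantorovichDual, ← hQ_cost, transportCost_add_potential, map_sub, hφ_apply, hφ_apply,
          add_sub_assoc]
    _ < t := hφ Q hQ

theorem isGreatest_iInf_kantorovichDual (c : α → β → ℝ) {p : α → ℝ} {q : β → ℝ}
    (hne : (transportPlans p q).Nonempty) :
    IsGreatest (transportCost c '' transportPlans p q) (⨅ v, kantorovichDual c p q v) := by
  obtain ⟨Q, hQ, hmax⟩ := (isCompact_transportPlans p q).exists_isMaxOn hne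
    (transportCost c).continuous.continuousOn
  have hbdd : BddBelow (Set.range (kantorovichDual c p q)) :=
    ⟨_, Set.forall_mem_range.2 (transportCost_le_kantorovichDual c hQ)⟩
  have hle : ⨅ v, kantorovichDual c p q v ≤ transportCost c Q := by
    refine le_of_forall_gt_imp_ge_of_dense fun t ht ↦ ?_
    obtain ⟨v, hv⟩ := exists_kantorovichDual_lt c hne fun R hR ↦ (hmax hR).trans_lt ht
    exact (ciInf_le hbdd v).trans hv.le
  rw [hle.antisymm (le_ciInf (transportCost_le_kantorovichDual c hQ))]
  exact ⟨⟨Q, hQ, rfl⟩, Set.forall_mem_image.2 hmax⟩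

end KantorovichDuality

section MaxMargin

variable {ι : Type*}

theorem SM_eq_iSup_add_sub [Finite ι] [Nonempty ι] (L : ι → ι → ℝ) (v : ι → ℝ) (y : ι) :
    SM L v y = (⨆ y', (L y y' + v y')) - v y :=
  (ciSup_sub (Set.finite_range _).bddAbove (v y)).symm

variable [Fintype ι]

theorem HM_eq_iInf_kantorovichDual [Nonempty ι] (L : ι → ι → ℝ) (q : ι → ℝ) :
    HM L q = ⨅ v, kantorovichDual L q q v := by
  simp only [HM, SM_eq_iSup_add_sub, kantorovichDual, mul_sub, Finset.sum_sub_distrib]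

theorem Upoly_eq_transportPlans (q : ι → ℝ) : Upoly q = transportPlans q q := by
  ext Q
  simp only [Upoly, transportPlans, plansFrom, Set.mem_ofPred_eq, funext_iff,
    secondMarginal_apply, and_assoc]

theorem single_mem_transportPlans_self [DecidableEq ι] {q : ι → ℝ} (hq : ∀ y, 0 ≤ q y) :
    (fun y ↦ Pi.single y (q y)) ∈ transportPlans q q :=
  ⟨single_mem_plansFrom hq id, funext fun y ↦ by simp [secondMarginal_apply]⟩

end MaxMargin

theorem stmt9_general {Y : Type*} [Fintype Y] [Nonempty Y] (L : Y → Y → ℝ) {q : Y → ℝ}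
    (hq : ∀ y, 0 ≤ q y) :
    IsGreatest ((fun Q => ∑ y, ∑ y', L y y' * Q y y') '' Upoly q) (HM L q) := by
  classical
  rw [HM_eq_iInf_kantorovichDual, Upoly_eq_transportPlans, ← funext (transportCost_apply L)]
  exact isGreatest_iInf_kantorovichDual L ⟨_, single_mem_transportPlans_self hq⟩

theorem stmt9 (Y : Type*) [Fintype Y] [DecidableEq Y] [Nonempty Y] (L : Y → Y → ℝ)
    (hcard : 2 ≤ Fintype.card Y)
    (hnonneg : ∀ y y', 0 ≤ L y y')
    (hzero : ∀ y y', L y y' = 0 ↔ y = y') :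
    ∀ q ∈ simplexSet Y,
      IsGreatest ((fun Q => ∑ y, ∑ y', L y y' * Q y y') '' Upoly q) (HM L q) :=
  fun _ hq ↦ stmt9_general L hq.1
end

section
/- For every v : Y → ℝ and every y ∈ Y, the three margin losses are ordered pointwise: S_RM(v, y) ≤ S_MM(v, y) ≤ S_M(v, y). -/
open Finset Set

variable {Y : Type*} [Fintype Y] [DecidableEq Y] [Nonempty Y]

/-!
On the prediction set `Δ(y)` the label `y` attains the Bayes risk, so there the objective
`⟨L_y, q⟩ + ⟨v, q⟩` of the Restricted-Max-Margin loss is the objective `H_L(q) + ⟨v, q⟩` of the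
Max-Min-Margin loss, which is maximized over the larger set `Δ`. On all of `Δ` that objective is at
most `⟨L_y + v, q⟩`, an average of the numbers `L y y' + v y'`, whose maximum is `S_M(v, y) + v y`.
-/

theorem sum_mul_le_of_mem_stdSimplex {𝕜 ι : Type*} [Semiring 𝕜] [PartialOrder 𝕜]
    [IsOrderedRing 𝕜] [Fintype ι] {q f : ι → 𝕜} {c : 𝕜} (hq : q ∈ stdSimplex 𝕜 ι)
    (hf : ∀ i, f i ≤ c) : ∑ i, f i * q i ≤ c :=
  calc ∑ i, f i * q i
      ≤ ∑ i, c * q i := Finset.sum_le_sum fun i _ ↦ mul_le_mul_of_nonneg_right (hf i) (hq.1 i)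
    _ = c := by rw [← Finset.mul_sum, hq.2, mul_one]

theorem simplexSet_eq_stdSimplex (ι : Type*) [Fintype ι] : simplexSet ι = stdSimplex ℝ ι := rfl

theorem add_le_SM_add {ι : Type*} [Finite ι] (L : ι → ι → ℝ) (v : ι → ℝ) (y y' : ι) :
    L y y' + v y' ≤ SM L v y + v y :=
  sub_le_iff_le_add.1 <| Finite.le_ciSup (fun y' ↦ L y y' + v y' - v y) y'

section MarginLosses

variable {ι : Type*} [Fintype ι] {L : ι → ι → ℝ} {q : ι → ℝ} {y : ι}

theorem simplexSet_nonempty [Nonempty ι] : (simplexSet ι).Nonempty :=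
  simplexSet_eq_stdSimplex ι ▸ Set.nonempty_coe_sort.1 inferInstance

theorem HL_le (L : ι → ι → ℝ) (q : ι → ℝ) (y : ι) : HL L q ≤ ∑ y', L y y' * q y' :=
  Finite.ciInf_le (fun z ↦ ∑ y', L z y' * q y') y

theorem mem_ystar_iff_forall_le :
    y ∈ ystar L q ↔ ∀ z, ∑ y', L y y' * q y' ≤ ∑ y', L z y' * q y' := by
  have : Nonempty ι := ⟨y⟩
  exact ⟨fun hy z ↦ hy.trans_le (HL_le L q z), fun h ↦ (le_ciInf h).antisymm (HL_le L q y)⟩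

theorem single_mem_predSet [DecidableEq ι] (hy : ∀ z, L y y ≤ L z y) :
    Pi.single y 1 ∈ predSet L y :=
  ⟨single_mem_stdSimplex ℝ y, mem_ystar_iff_forall_le.2 <| by simpa [Pi.single_apply] using hy⟩

theorem HL_add_le_SM_add (L : ι → ι → ℝ) (v : ι → ℝ) (y : ι) (hq : q ∈ simplexSet ι) :
    HL L q + ∑ z, v z * q z ≤ SM L v y + v y :=
  calc HL L q + ∑ z, v z * q z
      ≤ ∑ z, L y z * q z + ∑ z, v z * q z := by gcongr; exact HL_le L q y
    _ = ∑ z, (L y z + v z) * q z := by simp only [add_mul, Finset.sum_add_distrib]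
    _ ≤ SM L v y + v y :=
      sum_mul_le_of_mem_stdSimplex (simplexSet_eq_stdSimplex ι ▸ hq) (add_le_SM_add L v y)

theorem HL_add_le_SMM_add (L : ι → ι → ℝ) (v : ι → ℝ) (y : ι) (hq : q ∈ simplexSet ι) :
    HL L q + ∑ z, v z * q z ≤ SMM L v y + v y := by
  have hbdd : BddAbove ((fun p ↦ HL L p + ∑ z, v z * p z) '' simplexSet ι) :=
    ⟨SM L v y + v y, Set.forall_mem_image.2 fun _ hp ↦ HL_add_le_SM_add L v y hp⟩
  exact sub_le_iff_le_add.1 <| sub_le_sub_right (le_csSup hbdd (Set.mem_image_of_mem _ hq)) (v y)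

theorem SRM_le_SMM (v : ι → ℝ) (h : (predSet L y).Nonempty) : SRM L v y ≤ SMM L v y := by
  refine sub_le_iff_le_add.2 <| csSup_le (h.image _) <| Set.forall_mem_image.2 fun q hq ↦ ?_
  calc ∑ z, L y z * q z + ∑ z, v z * q z
      = HL L q + ∑ z, v z * q z := by rw [show ∑ z, L y z * q z = HL L q from hq.2]
    _ ≤ SMM L v y + v y := HL_add_le_SMM_add L v y hq.1

theorem SMM_le_SM (L : ι → ι → ℝ) (v : ι → ℝ) (y : ι) : SMM L v y ≤ SM L v y := by
  have : Nonempty ι := ⟨y⟩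
  exact sub_le_iff_le_add.2 <| csSup_le (simplexSet_nonempty.image _) <|
    Set.forall_mem_image.2 fun _ hq ↦ HL_add_le_SM_add L v y hq

end MarginLosses

theorem stmt11_general {ι : Type*} [Fintype ι] (L : ι → ι → ℝ) (v : ι → ℝ) (y : ι)
    (h : (predSet L y).Nonempty) : SRM L v y ≤ SMM L v y ∧ SMM L v y ≤ SM L v y :=
  ⟨SRM_le_SMM v h, SMM_le_SM L v y⟩

theorem stmt11 (Y : Type*) [Fintype Y] [DecidableEq Y] [Nonempty Y] (L : Y → Y → ℝ)
    (hcard : 2 ≤ Fintype.card Y)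
    (hnonneg : ∀ y y', 0 ≤ L y y')
    (hzero : ∀ y y', L y y' = 0 ↔ y = y') :
    ∀ (v : Y → ℝ) (y : Y), SRM L v y ≤ SMM L v y ∧ SMM L v y ≤ SM L v y :=
  fun v y ↦ stmt11_general L v y
    ⟨_, single_mem_predSet fun z ↦ ((hzero y y).2 rfl).trans_le (hnonneg z y)⟩
end

section
/- Let C_y ⊆ Δ be a nonempty compact convex set for each y ∈ Y, and define the surrogate loss S(v, y) = max_{p ∈ C_y} (⟨L_y, p⟩ + ⟨v, p⟩) − v y. Fix q ∈ Δ and assume there exists a family ν : Y → (Y → ℝ) with ν y ∈ C_y for all y and ∑_{y} q y · ν y = q (as vectors in Y → ℝ). Then inf_{v : Y → ℝ} ∑_{y} q y · S(v, y) = sup { ∑_{y} q y · ⟨L_y, ν y⟩ : ν : Y → (Y → ℝ), ν y ∈ C_y for all y, ∑_{y} q y · ν y = q }. -/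
open Finset Set

variable {Y : Type*} [Fintype Y] [DecidableEq Y] [Nonempty Y]

/-!
Maximizing `∑ y, q y * ⟨L y, ν y⟩` over `ν ∈ ∏ y, C y` under the constraint `∑ y, q y • ν y = q` is
a linear problem over a compact convex set, and the score vector `v` is the Lagrange multiplier of
the constraint. For fixed `v` the Lagrangian is a sum of terms in the separate `ν y`, so maximizing
it label by label gives the conditional risk `∑ y, q y * S(v, y)`. Hence the infimum of the
conditional risk is the Lagrangian dual value. There is no duality gap: the set of pairs
(constraint value, objective value) is compact and convex, so a hyperplane separates it from any
point just above the constrained maximum, and feasibility prevents that hyperplane from being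
vertical.
-/

section Duality

variable {E F : Type*} [AddCommGroup E] [Module ℝ E] [TopologicalSpace E]
  [IsTopologicalAddGroup E] [ContinuousSMul ℝ E] [LocallyConvexSpace ℝ E]
  [AddCommGroup F] [Module ℝ F] [TopologicalSpace F]

lemma exists_dual_add_lt_of_isClosed_convex {S : Set (E × ℝ)} (hconv : Convex ℝ S)
    (hclosed : IsClosed S) {b : E} {c : ℝ} (hfib : ∃ t, (b, t) ∈ S)
    (hc : ∀ t, (b, t) ∈ S → t < c) :
    ∃ v : StrongDual ℝ E, ∀ x ∈ S, x.2 + v x.1 < c + v b := by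
  have hnot : (b, c) ∉ S := fun h => (hc c h).false
  obtain ⟨f, u, hlt, hu⟩ := geometric_hahn_banach_closed_point hconv hclosed hnot
  let φ : StrongDual ℝ E := f.comp (ContinuousLinearMap.inl ℝ E ℝ)
  let a : ℝ := f (0, 1)
  have hf (e : E) (t : ℝ) : f (e, t) = φ e + t * a := by
    rw [← smul_eq_mul, ← map_smul, ContinuousLinearMap.comp_apply, ← map_add]
    simp
  have hsep : ∀ x ∈ S, φ x.1 + x.2 * a < φ b + c * a := fun x hx => by
    rw [← hf, ← hf]
    exact (hlt x hx).trans hu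
  have ha : 0 < a := by
    obtain ⟨t, ht⟩ := hfib
    have h : t * a < c * a := by simpa using hsep _ ht
    exact (pos_iff_pos_of_mul_pos (by linarith)).1 (sub_pos.2 (hc t ht))
  refine ⟨a⁻¹ • φ, fun x hx => lt_of_mul_lt_mul_right ?_ ha.le⟩
  simpa [add_mul, mul_right_comm _ _ a, ha.ne', add_comm] using hsep x hx

theorem iInf_sSup_lagrangian_eq_sSup [T2Space E] {K : Set F} (hK : IsCompact K)
    (hconv : Convex ℝ K) (A : F →L[ℝ] E) (g : StrongDual ℝ F) {b : E}
    (hfeas : ∃ x ∈ K, A x = b) :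
    ⨅ v : StrongDual ℝ E, (sSup ((fun x => g x + v (A x)) '' K) - v b) =
      sSup (g '' {x ∈ K | A x = b}) := by
  have hweak (v : StrongDual ℝ E) {x : F} (hx : x ∈ K) (hxb : A x = b) :
      g x ≤ sSup ((fun x => g x + v (A x)) '' K) - v b :=
    le_sub_iff_add_le.2 <| le_csSup (hK.image (by fun_prop)).bddAbove ⟨x, hx, by simp only [hxb]⟩
  obtain ⟨x₀, hx₀, hx₀b⟩ := hfeas
  apply le_antisymm
  · refine le_of_forall_gt_imp_ge_of_dense fun c hc => ?_
    have hbdd : BddAbove (g '' {x ∈ K | A x = b}) :=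
      (hK.image g.continuous).bddAbove.mono (image_mono (sep_subset _ _))
    obtain ⟨v, hv⟩ : ∃ v : StrongDual ℝ E, ∀ x ∈ A.prod g '' K, x.2 + v x.1 < c + v b := by
      refine exists_dual_add_lt_of_isClosed_convex (hconv.linear_image (A.prod g).toLinearMap)
        (hK.image (A.prod g).continuous).isClosed ⟨g x₀, x₀, hx₀, Prod.ext hx₀b rfl⟩ ?_
      rintro t ⟨x, hx, hxt⟩
      obtain ⟨hxb, rfl⟩ := Prod.ext_iff.1 hxt
      exact (le_csSup hbdd ⟨x, ⟨hx, hxb⟩, rfl⟩).trans_lt hc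
    refine ciInf_le_of_le ⟨g x₀, forall_mem_range.2 fun v => hweak v hx₀ hx₀b⟩ v ?_
    refine sub_le_iff_le_add.2 (csSup_le ⟨_, x₀, hx₀, rfl⟩ (forall_mem_image.2 fun x hx => ?_))
    exact (hv _ (mem_image_of_mem _ hx)).le
  · exact le_ciInf fun v => csSup_le ⟨g x₀, x₀, ⟨hx₀, hx₀b⟩, rfl⟩ <|
      forall_mem_image.2 fun _ hx => hweak v hx.1 hx.2

end Duality

lemma isGreatest_sum_image_univ_pi {ι R : Type*} [Fintype ι] [AddCommMonoid R] [PartialOrder R]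
    [IsOrderedAddMonoid R] {X : ι → Type*} {s : ∀ i, Set (X i)} {f : ∀ i, X i → R} {m : ι → R}
    (h : ∀ i, IsGreatest (f i '' s i) (m i)) :
    IsGreatest ((fun x : ∀ i, X i => ∑ i, f i (x i)) '' univ.pi s) (∑ i, m i) := by
  constructor
  · choose x hx hxm using fun i => (h i).1
    exact ⟨x, fun i _ => hx i, Finset.sum_congr rfl fun i _ => hxm i⟩
  · rintro _ ⟨x, hx, rfl⟩
    exact Finset.sum_le_sum fun i _ => (h i).2 (mem_image_of_mem _ (hx i trivial))

lemma sSup_image_univ_pi_sum_mul {ι : Type*} [Fintype ι] {X : ι → Type*}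
    [∀ i, TopologicalSpace (X i)] {s : ∀ i, Set (X i)} (hs : ∀ i, IsCompact (s i))
    (hne : ∀ i, (s i).Nonempty) {f : ∀ i, X i → ℝ} (hf : ∀ i, ContinuousOn (f i) (s i))
    {w : ι → ℝ} (hw : ∀ i, 0 ≤ w i) :
    sSup ((fun x : ∀ i, X i => ∑ i, w i * f i (x i)) '' univ.pi s) =
      ∑ i, w i * sSup (f i '' s i) := by
  refine (isGreatest_sum_image_univ_pi (f := fun i p => w i * f i p) fun i => ?_).csSup_eq
  have hmax : IsGreatest (f i '' s i) (sSup (f i '' s i)) :=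
    ((hs i).image_of_continuousOn (hf i)).isGreatest_sSup ((hne i).image _)
  simpa only [image_image] using (monotone_mul_left_of_nonneg (hw i)).map_isGreatest hmax

/-- The identification of `ι → ℝ` with its topological dual through the pairing `∑ i, v i * p i`,
which turns a score vector into a Lagrange multiplier. -/
noncomputable def dotProductStrongDualEquiv (ι : Type*) [Fintype ι] [DecidableEq ι] :
    (ι → ℝ) ≃ₗ[ℝ] StrongDual ℝ (ι → ℝ) :=
  dotProductEquiv ℝ ι ≪≫ₗ LinearMap.toContinuousLinearMap

lemma dotProductStrongDualEquiv_apply {ι : Type*} [Fintype ι] [DecidableEq ι] (v p : ι → ℝ) :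
    dotProductStrongDualEquiv ι v p = ∑ i, v i * p i :=
  rfl

theorem stmt12_general {ι E : Type*} [Fintype ι] [AddCommGroup E] [Module ℝ E]
    [TopologicalSpace E] [IsTopologicalAddGroup E] [ContinuousSMul ℝ E] [LocallyConvexSpace ℝ E]
    [T2Space E] (ℓ : ι → StrongDual ℝ E) {C : ι → Set E} (hcomp : ∀ i, IsCompact (C i))
    (hconv : ∀ i, Convex ℝ (C i)) {w : ι → ℝ} (hw : ∀ i, 0 ≤ w i) {b : E}
    (hex : ∃ ν : ι → E, (∀ i, ν i ∈ C i) ∧ ∑ i, w i • ν i = b) :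
    ⨅ v : StrongDual ℝ E, (∑ i, w i * sSup ((fun p => ℓ i p + v p) '' C i) - v b) =
      sSup {r : ℝ | ∃ ν : ι → E, (∀ i, ν i ∈ C i) ∧ ∑ i, w i • ν i = b ∧
        r = ∑ i, w i * ℓ i (ν i)} := by
  let A : (ι → E) →L[ℝ] E := ∑ i, w i • ContinuousLinearMap.proj i
  let g : StrongDual ℝ (ι → E) := ∑ i, w i • (ℓ i).comp (ContinuousLinearMap.proj i)
  have hA (ν : ι → E) : A ν = ∑ i, w i • ν i := by simp [A]
  have hg (ν : ι → E) : g ν = ∑ i, w i * ℓ i (ν i) := by simp [g]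
  obtain ⟨ν₀, hν₀, hν₀b⟩ := hex
  have hseparable (v : StrongDual ℝ E) :
      sSup ((fun ν => g ν + v (A ν)) '' univ.pi C) =
        ∑ i, w i * sSup ((fun p => ℓ i p + v p) '' C i) := by
    rw [← sSup_image_univ_pi_sum_mul hcomp (fun i => ⟨ν₀ i, hν₀ i⟩) (by fun_prop) hw]
    simp only [hA, hg, map_sum, map_smul, smul_eq_mul, mul_add, Finset.sum_add_distrib]
  have hvalues : g '' {ν ∈ univ.pi C | A ν = b} =
      {r : ℝ | ∃ ν : ι → E, (∀ i, ν i ∈ C i) ∧ ∑ i, w i • ν i = b ∧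
        r = ∑ i, w i * ℓ i (ν i)} := by
    ext r
    simp only [hA, hg, mem_image, mem_ofPred_eq, mem_univ_pi, and_assoc, eq_comm (b := r)]
  simp only [← hseparable, ← hvalues]
  exact iInf_sSup_lagrangian_eq_sSup (isCompact_univ_pi hcomp) (convex_pi fun i _ => hconv i) A g
    ⟨ν₀, fun i _ => hν₀ i, (hA ν₀).trans hν₀b⟩

theorem stmt12 (Y : Type*) [Fintype Y] [DecidableEq Y] [Nonempty Y] (L : Y → Y → ℝ)
    (hcard : 2 ≤ Fintype.card Y)
    (hnonneg : ∀ y y', 0 ≤ L y y')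
    (C : Y → Set (Y → ℝ))
    (hsub : ∀ y, C y ⊆ simplexSet Y)
    (hne : ∀ y, (C y).Nonempty)
    (hcomp : ∀ y, IsCompact (C y))
    (hconv : ∀ y, Convex ℝ (C y))
    (q : Y → ℝ) (hq : q ∈ simplexSet Y)
    (hex : ∃ ν : Y → Y → ℝ, (∀ y, ν y ∈ C y) ∧ ∑ y, q y • ν y = q) :
    (⨅ v : Y → ℝ, ∑ y, q y *
        (sSup ((fun p => ∑ y', L y y' * p y' + ∑ z, v z * p z) '' C y) - v y)) =
    sSup {r : ℝ | ∃ ν : Y → Y → ℝ, (∀ y, ν y ∈ C y) ∧ (∑ y, q y • ν y = q) ∧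
        r = ∑ y, q y * ∑ y', L y y' * ν y y'} := by
  simpa only [← (dotProductStrongDualEquiv Y).surjective.iInf_comp, dotProductStrongDualEquiv_apply,
    sub_mul, Finset.sum_sub_distrib, mul_comm (q _) (_ : ℝ)] using
    stmt12_general (fun y => dotProductStrongDualEquiv Y (L y)) hcomp hconv hq.1 hex
end
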